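/- arXiv:2512.20869 — 4 statements merged into one kernel-verified Lean document; each statement's English description precedes it below -/
import Mathlib

section
/- Let x_0, x_1, ..., x_m (m ≥ 1) be pairwise distinct elements of a linear order. For each j with 1 ≤ j ≤ m let ρ(j) = |{i : 1 ≤ i ≤ m, x_i < x_j}|, and let r = |{i : 1 ≤ i ≤ m, x_i < x_0}|. Then for every j with 1 ≤ j ≤ m, one has x_0 < x_j if and only if ρ(j) ≥ r. -/
section FamilyRank

variable {ι α : Type*}

/-- The rank of `a` with respect to the finite family `(x i)_{i ∈ s}`: the number of indices whose
member lies strictly below `a`. The element `a` need not belong to the family, so that the rank of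
a newly inserted element can be taken within the family of stored ones. -/
def familyRank [Preorder α] [DecidableLT α] (s : Finset ι) (x : ι → α) (a : α) : ℕ :=
  (s.filter fun i => x i < a).card

theorem familyRank_mono [Preorder α] [DecidableLT α] (s : Finset ι) (x : ι → α) :
    Monotone (familyRank s x) := fun _ _ hab =>
  Finset.card_le_card (Finset.monotone_filter_right s fun _ _ hi => hi.trans_le hab)

-- The index `j` is counted in the rank of `a` but not in that of `x j`.
theorem familyRank_apply_lt_familyRank [Preorder α] [DecidableLT α] {s : Finset ι} {x : ι → α}
    {a : α} {j : ι} (hj : j ∈ s) (hja : x j < a) :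
    familyRank s x (x j) < familyRank s x a := by
  refine Finset.card_lt_card ((Finset.ssubset_iff_of_subset ?_).mpr ⟨j, ?_, ?_⟩)
  · exact Finset.monotone_filter_right s fun _ _ hi => hi.trans hja
  · exact Finset.mem_filter.mpr ⟨hj, hja⟩
  · exact fun hmem => lt_irrefl _ (Finset.mem_filter.mp hmem).2

variable [LinearOrder α] {s : Finset ι} {x : ι → α} {a : α} {j : ι}

theorem familyRank_le_familyRank_apply_iff (hj : j ∈ s) :
    familyRank s x a ≤ familyRank s x (x j) ↔ a ≤ x j where
  mp hrank := not_lt.mp fun hja => (familyRank_apply_lt_familyRank hj hja).not_ge hrank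
  mpr haj := familyRank_mono s x haj

theorem step5_comparison_criterion_general (hj : j ∈ s) (hne : a ≠ x j) :
    a < x j ↔ familyRank s x a ≤ familyRank s x (x j) := by
  rw [familyRank_le_familyRank_apply_iff hj, hne.le_iff_lt]

end FamilyRank

/-- For pairwise distinct elements `x 0, x 1, …, x m` of a linear order,
with `ρ j` the rank of `x j` among `x 1, …, x m` and `r` the rank of `x 0`
among `x 0, x 1, …, x m`, we have `x 0 < x j` iff `ρ j ≥ r`. -/
theorem step5_comparison_criterion {α : Type*} [LinearOrder α] (m : ℕ) (hm : 1 ≤ m)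
    (x : ℕ → α)
    (hdist : ∀ i ≤ m, ∀ j ≤ m, i ≠ j → x i ≠ x j)
    (ρ : ℕ → ℕ)
    (hρ : ∀ j, 1 ≤ j → j ≤ m →
      ρ j = ((Finset.Icc 1 m).filter (fun i => x i < x j)).card)
    (r : ℕ)
    (hr : r = ((Finset.Icc 1 m).filter (fun i => x i < x 0)).card) :
    ∀ j, 1 ≤ j → j ≤ m → (x 0 < x j ↔ r ≤ ρ j) := by
  intro j h1 hj
  rw [hρ j h1 hj, hr]
  exact step5_comparison_criterion_general (Finset.mem_Icc.mpr ⟨h1, hj⟩)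
    (hdist 0 m.zero_le j hj (Nat.ne_of_lt h1))
end

section
/- Let T = T[0]T[1]...T[n-1] be a string of length n ≥ 1 over a linearly ordered alphabet such that T[n-1] is strictly smaller than every other symbol occurring in T and occurs only at position n-1. For 0 ≤ i < n let T_i denote the suffix T[i..n-1], and let LA[i] denote the length of the longest prefix of T_i that is a Lyndon word. Then LA[i] = j - i, where j = min{ k : i < k < n and T_k <_lex T_i } if such k exists, and j = n otherwise. -/
/-- The suffix `T[i..n-1]` of the string of length `n` represented by `T : ℕ → α`. -/
def suffixAt {α : Type*} (T : ℕ → α) (n i : ℕ) : List α :=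
  (List.range (n - i)).map (fun k => T (i + k))

/-- A Lyndon word: a nonempty string strictly lexicographically smaller than
all of its proper nonempty suffixes. -/
def IsLyndon {α : Type*} [LinearOrder α] (w : List α) : Prop :=
  w ≠ [] ∧ ∀ i, 0 < i → i < w.length → List.Lex (· < ·) w (w.drop i)

/-- Length of the longest prefix of the suffix `T_i` that is a Lyndon word. -/
noncomputable def longestLyndonPrefixLen {α : Type*} [LinearOrder α] (T : ℕ → α) (n i : ℕ) : ℕ :=
  sSup {L | L ≤ n - i ∧ IsLyndon ((suffixAt T n i).take L)}

/-!
Write `w = T_i` and let `j` be the least positive index with `w.drop j < w`; it exists because the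
empty suffix is smaller than `w`.

A Lyndon prefix longer than `j` would be smaller than its own suffix at `j`. That suffix is shorter,
so the two differ at some position, and hence `w < w.drop j`, a contradiction.

The prefix `u` of length `j` is Lyndon. Write `w = u ++ v`. If `u.drop k < u`, then `u.drop k` is a
prefix of `u`, since a mismatch would give `w.drop k < w` against the minimality of `j`. Cancelling
this border from `w < w.drop k` leaves `w.drop (j - k) < v`, and `v < w`, again against minimality.
-/

section Lex

variable {α : Type*} {r : α → α → Prop}

theorem nil_lex_of_ne_nil {l : List α} (hl : l ≠ []) : List.Lex r [] l :=
  not_imp_comm.1 List.not_nil_lex_iff.1 hl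

theorem prefix_or_forall_lex_append {l₁ l₂ : List α} (h : List.Lex r l₁ l₂) :
    l₁ <+: l₂ ∨ ∀ s t, List.Lex r (l₁ ++ s) (l₂ ++ t) := by
  induction h with
  | nil => exact .inl List.nil_prefix
  | rel hab => exact .inr fun _ _ => .rel hab
  | cons _ ih =>
    exact ih.imp (fun hp => (List.prefix_cons_inj _).2 hp) fun hlex s t => .cons (hlex s t)

end Lex

section LyndonPrefix

variable {α : Type*} [LinearOrder α] {w : List α} {j : ℕ}

theorem strictMono_append_left (s : List α) : StrictMono (s ++ ·) :=
  fun _ _ => List.append_left_lt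

theorem lt_drop_or_drop_lt (hw : w ≠ []) {k : ℕ} (hk : 0 < k) : w < w.drop k ∨ w.drop k < w := by
  refine lt_or_gt_of_ne fun h => ?_
  have hlen := congrArg List.length h
  have := List.length_pos_of_ne_nil hw
  rw [List.length_drop] at hlen
  omega

theorem IsLyndon.le_of_drop_lt {L : ℕ} (hlyn : IsLyndon (w.take L)) (hL : L ≤ w.length)
    (hj : 0 < j) (hdrop : w.drop j < w) : L ≤ j := by
  by_contra! hjL
  have hlen : (w.take L).length = L := List.length_take_of_le hL
  rcases prefix_or_forall_lex_append (hlyn.2 j hj (by omega)) with hprefix | hlex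
  · have := hprefix.length_le
    rw [List.length_drop] at this
    omega
  · have hlt : w < w.drop j := by
      change List.Lex (· < ·) w (w.drop j)
      simpa only [← List.drop_append_of_le_length (hlen.symm ▸ hjL.le : j ≤ (w.take L).length),
        List.take_append_drop] using hlex (w.drop L) (w.drop L)
    exact lt_asymm hlt hdrop

theorem isLyndon_of_forall_append_lt_drop_append {u v : List α} (hu : u ≠ []) (hv : v < u ++ v)
    (hdrop : ∀ k, 0 < k → k < u.length → u ++ v < u.drop k ++ v) : IsLyndon u := by
  refine ⟨hu, fun k hk hku => ?_⟩
  refine (lt_drop_or_drop_lt hu hk).resolve_right fun hlt => ?_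
  rcases prefix_or_forall_lex_append hlt with ⟨z, hz⟩ | hlex
  · have hdrop_z : u.drop (u.length - k) = z := by
      rw [← List.length_drop]
      exact (congrArg (List.drop _) hz).symm.trans List.drop_left
    have hzv : z ++ v < v := (strictMono_append_left (u.drop k)).lt_iff_lt.1 <| by
      rw [← List.append_assoc, hz]
      exact hdrop k hk hku
    have huz : u ++ v < z ++ v := hdrop_z ▸ hdrop (u.length - k) (by omega) (by omega)
    exact lt_irrefl v <| calc
      v < u ++ v := hv
      _ < z ++ v := huz
      _ < v := hzv
  · exact lt_asymm (hdrop k hk hku) (hlex v v)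

theorem le_length_of_isLeast_drop_lt (hj : IsLeast {k | 0 < k ∧ w.drop k < w} j) :
    j ≤ w.length := by
  have hw : w ≠ [] := by
    rintro rfl
    exact lt_irrefl [] (List.drop_nil ▸ hj.1.2)
  refine hj.2 ⟨List.length_pos_of_ne_nil hw, ?_⟩
  rw [List.drop_length]
  exact nil_lex_of_ne_nil hw

theorem isLyndon_take_of_isLeast_drop_lt (hj : IsLeast {k | 0 < k ∧ w.drop k < w} j) :
    IsLyndon (w.take j) := by
  have hlen : (w.take j).length = j := List.length_take_of_le (le_length_of_isLeast_drop_lt hj)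
  obtain ⟨⟨hpos, hdrop⟩, hmin⟩ := hj
  refine isLyndon_of_forall_append_lt_drop_append (v := w.drop j)
    (List.ne_nil_of_length_pos (hlen.symm ▸ hpos)) ?_ fun k hk hkj => ?_
  · rwa [List.take_append_drop]
  · rw [← List.drop_append_of_le_length hkj.le, List.take_append_drop]
    have hw : w ≠ [] := fun h => by simp [h] at hkj
    exact (lt_drop_or_drop_lt hw hk).resolve_right fun hlt => (hlen ▸ hkj).not_ge (hmin ⟨hk, hlt⟩)

theorem isGreatest_isLyndon_take (hj : IsLeast {k | 0 < k ∧ w.drop k < w} j) :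
    IsGreatest {L | L ≤ w.length ∧ IsLyndon (w.take L)} j :=
  ⟨⟨le_length_of_isLeast_drop_lt hj, isLyndon_take_of_isLeast_drop_lt hj⟩,
    fun _ ⟨hL, hlyn⟩ => hlyn.le_of_drop_lt hL hj.1.1 hj.1.2⟩

end LyndonPrefix

section Suffix

variable {α : Type*} (T : ℕ → α) (n i : ℕ)

theorem length_suffixAt : (suffixAt T n i).length = n - i := by
  simp [suffixAt]

theorem drop_suffixAt (k : ℕ) : (suffixAt T n i).drop k = suffixAt T n (i + k) := by
  apply List.ext_getElem
  · simp [length_suffixAt, Nat.sub_sub]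
  · simp [suffixAt, Nat.add_assoc]

end Suffix

theorem isLeast_drop_suffixAt_lt {α : Type*} [LinearOrder α] {T : ℕ → α} {n i j : ℕ} (hi : i < n)
    (hj : IsLeast {k | k = n ∨ (i < k ∧ k < n ∧ suffixAt T n k < suffixAt T n i)} j) :
    IsLeast {k | 0 < k ∧ (suffixAt T n i).drop k < suffixAt T n i} (j - i) := by
  obtain ⟨hmem, hmin⟩ := hj
  have hne : suffixAt T n i ≠ [] := List.ne_nil_of_length_pos (by rw [length_suffixAt]; omega)
  simp only [drop_suffixAt]
  refine ⟨?_, fun k ⟨hk, hlt⟩ => ?_⟩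
  · rcases hmem with rfl | ⟨hij, -, hlt⟩
    · refine ⟨by omega, ?_⟩
      rw [Nat.add_sub_cancel' hi.le]
      exact lt_of_eq_of_lt (by simp [suffixAt]) (nil_lex_of_ne_nil hne)
    · exact ⟨by omega, by rwa [Nat.add_sub_cancel' hij.le]⟩
  · have hle : j ≤ i + k := by
      rcases lt_or_ge (i + k) n with hkn | hnk
      · exact hmin (.inr ⟨by omega, hkn, hlt⟩)
      · exact (hmin (.inl rfl)).trans hnk
    omega

theorem lyndonArray_eq_nsv_general {α : Type*} [LinearOrder α] (T : ℕ → α) (n i : ℕ) (hi : i < n)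
    (j : ℕ) (hj : j = sInf {k | k = n ∨
      (i < k ∧ k < n ∧ List.Lex (· < ·) (suffixAt T n k) (suffixAt T n i))}) :
    longestLyndonPrefixLen T n i = j - i := by
  have hleast : IsLeast {k | k = n ∨ (i < k ∧ k < n ∧ suffixAt T n k < suffixAt T n i)} j :=
    hj ▸ isLeast_csInf ⟨n, .inl rfl⟩
  have hgreatest := isGreatest_isLyndon_take (isLeast_drop_suffixAt_lt hi hleast)
  rw [length_suffixAt] at hgreatest
  exact hgreatest.csSup_eq

/-- For a string `T` of length `n ≥ 1` whose last symbol is strictly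
smaller than every other symbol (and occurs only at position `n-1`),
`LA[i] = j - i` where `j` is the smallest index `k > i` with `T_k <_lex T_i`,
and `j = n` if no such `k` exists. -/
theorem lyndonArray_eq_nsv {α : Type*} [LinearOrder α] (T : ℕ → α) (n : ℕ) (hn : 1 ≤ n)
    (hend : ∀ k, k < n - 1 → T (n - 1) < T k)
    (i : ℕ) (hi : i < n) (j : ℕ)
    (hj : j = sInf {k | k = n ∨
      (i < k ∧ k < n ∧ List.Lex (· < ·) (suffixAt T n k) (suffixAt T n i))}) :
    longestLyndonPrefixLen T n i = j - i :=
  lyndonArray_eq_nsv_general T n i hi j hj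
end

section
/- Let T = T[0]T[1]...T[n-1] be a string of length n ≥ 2 over a linearly ordered alphabet such that T[n-1] is strictly smaller than every other symbol occurring in T and occurs only at position n-1. Fix s with 0 ≤ s < n-1 and let c = T[s]. Then |{ j : s < j < n, T_j <_lex T_s }| = |{ j : s < j < n, T[j] < c }| + |{ j : s < j < n-1, T[j] = c and T_{j+1} <_lex T_{s+1} }|. -/
/-!
Comparing the first symbols of two nonempty suffixes shows that `T_j < T_s` exactly when either
`T[j] < T[s]`, or `T[j] = T[s]` and `T_{j+1} < T_{s+1}`, and these alternatives exclude each
other. Since `T[n-1] ≠ T[s]`, the last position, which is followed by the empty suffix, never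
falls under the second one.
-/

section

variable {α : Type*} (r : α → α → Prop) (T : ℕ → α) {n : ℕ}

theorem suffixAt_eq_cons {i : ℕ} (hi : i < n) :
    suffixAt T n i = T i :: suffixAt T n (i + 1) := by
  have hlen : n - i = (n - (i + 1)) + 1 := by omega
  simp only [suffixAt, hlen, List.range_succ_eq_map, List.map_cons, List.map_map,
    Function.comp_def, Nat.add_zero, Nat.succ_eq_add_one, Nat.add_right_comm, Nat.add_assoc]

theorem lex_suffixAt_iff {i j : ℕ} (hi : i < n) (hj : j < n) :
    List.Lex r (suffixAt T n i) (suffixAt T n j) ↔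
      r (T i) (T j) ∨ T i = T j ∧ List.Lex r (suffixAt T n (i + 1)) (suffixAt T n (j + 1)) := by
  rw [suffixAt_eq_cons T hi, suffixAt_eq_cons T hj, List.cons_lex_cons_iff]

theorem ncard_lex_suffixAt [Std.Irrefl r] {s : ℕ} (hs : s < n) :
    Set.ncard {j : ℕ | s < j ∧ j < n ∧ List.Lex r (suffixAt T n j) (suffixAt T n s)} =
      Set.ncard {j : ℕ | s < j ∧ j < n ∧ r (T j) (T s)} +
      Set.ncard {j : ℕ | s < j ∧ j < n ∧ T j = T s ∧
        List.Lex r (suffixAt T n (j + 1)) (suffixAt T n (s + 1))} := by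
  rw [← Set.ncard_union_eq ?_ ((Set.finite_lt_nat n).subset fun j hj => hj.2.1)
    ((Set.finite_lt_nat n).subset fun j hj => hj.2.1)]
  · congr 1
    ext j
    simp only [Set.mem_union, Set.mem_ofPred_eq, ← and_or_left]
    exact and_congr_right fun _ => and_congr_right fun hj => lex_suffixAt_iff r T hj hs
  · rw [Set.disjoint_left]
    rintro j ⟨_, _, hlt⟩ ⟨_, _, heq, _⟩
    exact Std.Irrefl.irrefl (r := r) (T s) (heq ▸ hlt)

theorem step2_rank_counting_general [Std.Irrefl r] {s : ℕ} (hs : s < n)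
    (hend : T (n - 1) ≠ T s) :
    Set.ncard {j : ℕ | s < j ∧ j < n ∧ List.Lex r (suffixAt T n j) (suffixAt T n s)} =
      Set.ncard {j : ℕ | s < j ∧ j < n ∧ r (T j) (T s)} +
      Set.ncard {j : ℕ | s < j ∧ j < n - 1 ∧ T j = T s ∧
        List.Lex r (suffixAt T n (j + 1)) (suffixAt T n (s + 1))} := by
  have lt_pred_iff : ∀ j, T j = T s → (j < n ↔ j < n - 1) := by
    intro j hj
    have : j ≠ n - 1 := by
      rintro rfl
      exact hend hj
    omega
  rw [ncard_lex_suffixAt r T hs]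
  congr 3
  ext j
  exact and_congr_right fun _ => and_congr_left fun hj => lt_pred_iff j hj.1

end

/-- (Correctness of Step 2.) The rank of the suffix `T_s` among the
suffixes `T_{s+1}, …, T_{n-1}` equals the number of positions `j > s` holding a symbol
strictly smaller than `c = T[s]`, plus the number of positions `j > s` holding `c`
and followed by a suffix smaller than `T_{s+1}`. -/
theorem step2_rank_counting {α : Type*} [LinearOrder α]
    (T : ℕ → α) (n : ℕ) (hn : 2 ≤ n)
    (hend : ∀ k, k < n - 1 → T (n - 1) < T k)
    (s : ℕ) (hs : s < n - 1) (c : α) (hc : c = T s) :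
    Set.ncard {j : ℕ | s < j ∧ j < n ∧
        List.Lex (· < ·) (suffixAt T n j) (suffixAt T n s)} =
      Set.ncard {j : ℕ | s < j ∧ j < n ∧ T j < c} +
      Set.ncard {j : ℕ | s < j ∧ j < n - 1 ∧ T j = c ∧
        List.Lex (· < ·) (suffixAt T n (j + 1)) (suffixAt T n (s + 1))} := by
  subst hc
  exact step2_rank_counting_general (· < ·) T (by omega) (hend s hs).ne
end

section
/- Let T = T[0]T[1]...T[n-1] be a string of length n ≥ 2 over a linearly ordered alphabet such that the end marker $ = T[n-1] is strictly smaller than every other symbol occurring in T and occurs only at position n-1. Fix s with 0 ≤ s < n-1, let U = T_{s+1} be the suffix of length m = n-s-1, let BWT(U) be the Burrows–Wheeler Transform of U, and let p be the unique index with BWT(U)[p] = $. Then for every symbol c ≠ $, the number of occurrences of c among BWT(U)[0], ..., BWT(U)[p] equals |{ j : s+1 ≤ j < n-1, T[j] = c and T_{j+1} <_lex T_{s+1} }|. -/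
/-!
The map `i ↦ SA[i] - 1` carries the rows of `BWT(U)` holding a symbol `c ≠ $` to the occurrences of
`c` in `U`, and the row `p` of the marker is the one with `SA[p] = 0`. Writing `key k` for the
suffix `U_k`, or any other key by which the rows are sorted, row `i` strictly precedes row `p`
exactly when `key SA[i] < key 0`, that is, when the suffix following the occurrence at `SA[i] - 1`
is smaller than `U`.
-/

section BurrowsWheeler

variable {α β : Type*} [Preorder β] {m : ℕ}

/-- The Burrows–Wheeler transform of the string `U[0..m-1]` read off a suffix array `sa`. The end
marker `U[m-1]` is passed separately as `e`; for `m ≥ 1` the values of `U` from `m - 1` on are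
never read. -/
def bwtOfSuffixArray (U : ℕ → α) (e : α) (sa : Equiv.Perm (Fin m)) (i : Fin m) : α :=
  if (sa i : ℕ) = 0 then e else U (sa i - 1)

variable {U : ℕ → α} {e c : α} {sa : Equiv.Perm (Fin m)} {i p : Fin m} {key : ℕ → β}

theorem bwtOfSuffixArray_eq_iff_of_ne (hc : c ≠ e) :
    bwtOfSuffixArray U e sa i = c ↔ ∃ j, (sa i : ℕ) = j + 1 ∧ U j = c := by
  unfold bwtOfSuffixArray
  rcases (sa i : ℕ) with _ | k <;> simp [hc.symm]

theorem bwtOfSuffixArray_eq_endMarker_iff (he : ∀ k, k + 1 < m → U k ≠ e) :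
    bwtOfSuffixArray U e sa i = e ↔ (sa i : ℕ) = 0 := by
  refine ⟨fun h => ?_, fun h => if_pos h⟩
  by_contra hne
  exact he (sa i - 1) (by omega) ((if_neg hne).symm.trans h)

theorem le_and_bwtOfSuffixArray_eq_iff (hsa : StrictMono fun i => key (sa i))
    (hp : (sa p : ℕ) = 0) (hc : c ≠ e) :
    i ≤ p ∧ bwtOfSuffixArray U e sa i = c ↔
      ∃ j, (sa i : ℕ) = j + 1 ∧ U j = c ∧ key (j + 1) < key 0 := by
  have key_lt_iff : key (sa i) < key 0 ↔ i < p := by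
    simpa only [hp] using hsa.lt_iff_lt (a := i) (b := p)
  rw [bwtOfSuffixArray_eq_iff_of_ne hc]
  constructor
  · rintro ⟨hip, j, hj, hUj⟩
    have hne : i ≠ p := by rintro rfl; omega
    exact ⟨j, hj, hUj, hj ▸ key_lt_iff.mpr (hip.lt_of_ne hne)⟩
  · rintro ⟨j, hj, hUj, hkey⟩
    exact ⟨(key_lt_iff.mp (hj ▸ hkey)).le, j, hj, hUj⟩

theorem ncard_le_and_bwtOfSuffixArray_eq (hsa : StrictMono fun i => key (sa i))
    (hp : (sa p : ℕ) = 0) (hc : c ≠ e) :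
    {i | i ≤ p ∧ bwtOfSuffixArray U e sa i = c}.ncard =
      {j | j + 1 < m ∧ U j = c ∧ key (j + 1) < key 0}.ncard := by
  have image_eq : (fun i => (sa i : ℕ)) '' {i | i ≤ p ∧ bwtOfSuffixArray U e sa i = c} =
      Nat.succ '' {j | j + 1 < m ∧ U j = c ∧ key (j + 1) < key 0} := by
    ext k
    simp only [le_and_bwtOfSuffixArray_eq_iff hsa hp hc, Set.mem_image, Set.mem_ofPred_eq]
    constructor
    · rintro ⟨i, ⟨j, hj, hUj, hkey⟩, rfl⟩
      exact ⟨j, ⟨hj ▸ (sa i).isLt, hUj, hkey⟩, hj.symm⟩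
    · rintro ⟨j, ⟨hjm, hUj, hkey⟩, rfl⟩
      exact ⟨sa.symm ⟨j + 1, hjm⟩, ⟨j, by simp, hUj, hkey⟩, by simp⟩
  rw [← Set.ncard_image_of_injective {j | _} Nat.succ_injective, ← image_eq]
  exact (Set.ncard_image_of_injective _ (Fin.val_injective.comp sa.injective)).symm

theorem step2_occurrence_counting_general (T : ℕ → α) (key : ℕ → β) (n s : ℕ)
    (hend : ∀ k, s < k → k < n - 1 → T k ≠ T (n - 1))
    (saU : Equiv.Perm (Fin (n - s - 1))) (hsaU : StrictMono fun i => key (s + 1 + saU i))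
    (bwtU : Fin (n - s - 1) → α)
    (hbwtU : ∀ i, bwtU i = bwtOfSuffixArray (fun k => T (s + 1 + k)) (T (n - 1)) saU i)
    (p : Fin (n - s - 1)) (hp : bwtU p = T (n - 1)) (c : α) (hc : c ≠ T (n - 1)) :
    {i | i ≤ p ∧ bwtU i = c}.ncard =
      {j | s + 1 ≤ j ∧ j < n - 1 ∧ T j = c ∧ key (j + 1) < key (s + 1)}.ncard := by
  obtain rfl := funext hbwtU
  have saU_p : (saU p : ℕ) = 0 :=
    (bwtOfSuffixArray_eq_endMarker_iff fun k hk => hend _ (by omega) (by omega)).mp hp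
  have shift : {j | s + 1 ≤ j ∧ j < n - 1 ∧ T j = c ∧ key (j + 1) < key (s + 1)} =
      (s + 1 + ·) '' {j | j + 1 < n - s - 1 ∧ T (s + 1 + j) = c ∧
        key (s + 1 + (j + 1)) < key (s + 1)} := by
    ext j
    constructor
    · rintro ⟨hsj, hjn, hTj, hkey⟩
      obtain ⟨j, rfl⟩ := Nat.exists_eq_add_of_le hsj
      exact ⟨j, ⟨by omega, hTj, hkey⟩, rfl⟩
    · rintro ⟨j, ⟨hjn, hTj, hkey⟩, rfl⟩
      exact ⟨Nat.le_add_right _ _, by dsimp only; omega, hTj, hkey⟩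
  rw [shift, Set.ncard_image_of_injective _ (add_right_injective _)]
  exact ncard_le_and_bwtOfSuffixArray_eq (key := fun k => key (s + 1 + k)) hsaU saU_p hc

end BurrowsWheeler

/-- Let `U = T_{s+1}` (of length `m = n-s-1`) and let `p` be the unique
position of the end marker `$ = T[n-1]` in `BWT(U)`. For every symbol `c ≠ $`, the
number of occurrences of `c` in `BWT(U)[0..p]` equals the number of positions
`s+1 ≤ j < n-1` with `T[j] = c` whose following suffix satisfies `T_{j+1} <_lex T_{s+1}`. -/
theorem step2_occurrence_counting {α : Type*} [LinearOrder α]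
    (T : ℕ → α) (n : ℕ) (hn : 2 ≤ n)
    (hend : ∀ k, k < n - 1 → T (n - 1) < T k)
    (s : ℕ) (hs : s < n - 1)
    (saU : Equiv.Perm (Fin (n - s - 1)))
    (hsaU : ∀ a b : Fin (n - s - 1), a < b →
      List.Lex (· < ·) (suffixAt T n (s + 1 + (saU a : ℕ)))
                       (suffixAt T n (s + 1 + (saU b : ℕ))))
    (bwtU : Fin (n - s - 1) → α)
    (hbwtU : ∀ i : Fin (n - s - 1),
      bwtU i = if (saU i : ℕ) = 0 then T (n - 1) else T (s + 1 + ((saU i : ℕ) - 1)))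
    (p : Fin (n - s - 1)) (hp : bwtU p = T (n - 1)) :
    ∀ c : α, c ≠ T (n - 1) →
      Set.ncard {i : Fin (n - s - 1) | (i : ℕ) ≤ (p : ℕ) ∧ bwtU i = c} =
      Set.ncard {j : ℕ | s + 1 ≤ j ∧ j < n - 1 ∧ T j = c ∧
        List.Lex (· < ·) (suffixAt T n (j + 1)) (suffixAt T n (s + 1))} := by
  exact step2_occurrence_counting_general T (suffixAt T n) n s (fun k _ hk => (hend k hk).ne')
    saU hsaU bwtU hbwtU p hp
end
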